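/- The collection {F + φ(z) : z ∈ ℤ[1/2]} covers K = ℝ × ℚ₂, i.e., F + φ(ℤ[1/2]) = K. -/

import Mathlib

/-- The diagonal embedding `φ : ℚ → K = ℝ × ℚ₂`, `φ(z) = (z, z)`. -/
noncomputable def phi (z : ℚ) : ℝ × ℚ_[2] := ((z : ℝ), (z : ℚ_[2]))

/-- The tile `F ⊂ K = ℝ × ℚ₂`: all points of the form
`(1/2)·∑_{i=1}^{∞} d_{-i}·φ(1)·(-3/2)^{-i}` with digits `d_{-i} ∈ {0,1,2}`, the series
converging in `K` since multiplication by `(-3/2)⁻¹` contracts both coordinates. -/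
noncomputable def Ftile : Set (ℝ × ℚ_[2]) :=
  {x : ℝ × ℚ_[2] | ∃ d : ℕ → ℕ, (∀ i, d i ≤ 2) ∧
    HasSum (fun i : ℕ => phi ((1 / 2 : ℚ) * (d i : ℚ) * (-3 / 2 : ℚ) ^ (-(i : ℤ) - 1))) x}


lemma phi_add (a b : ℚ) : phi (a + b) = phi a + phi b := by
  ext <;> simp [phi]

lemma phi_mul (a b : ℚ) : phi (a * b) = phi a * phi b := by
  ext <;> simp [phi]

lemma phi_sub (a b : ℚ) : phi (a - b) = phi a - phi b := by
  ext <;> simp [phi]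

lemma phi_one : phi 1 = 1 := by
  ext <;> simp [phi]

lemma phi_pow (a : ℚ) (n : ℕ) : phi (a ^ n) = phi a ^ n := by
  ext <;> simp [phi]

/-- dyadic rationals -/
def IsDy (z : ℚ) : Prop := ∃ (a : ℤ) (l : ℕ), z = (a : ℚ) / 2 ^ l

lemma IsDy.sub {x y : ℚ} (hx : IsDy x) (hy : IsDy y) : IsDy (x - y) := by
  obtain ⟨a, l, rfl⟩ := hx
  obtain ⟨b, m, rfl⟩ := hy
  refine ⟨a * 2 ^ m - b * 2 ^ l, l + m, ?_⟩
  push_cast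
  rw [pow_add]
  field_simp

lemma term_eq (d i : ℕ) :
    phi ((1 / 2 : ℚ) * (d : ℚ) * (-3 / 2 : ℚ) ^ (-(i : ℤ) - 1))
      = phi ((d : ℚ) / 2) * phi (-2 / 3) ^ (i + 1) := by
  rw [← phi_pow, ← phi_mul]
  congr 1
  have h : (-(i : ℤ) - 1) = -((i + 1 : ℕ) : ℤ) := by push_cast; ring
  have h' : (-3 / 2 : ℚ)⁻¹ = -2 / 3 := by norm_num
  rw [h, zpow_neg, zpow_natCast, ← inv_pow, h']
  ring

lemma norm_two_padic : ‖(2 : ℚ_[2])‖ = 1 / 2 := by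
  have := Padic.norm_p (p := 2)
  simpa using this

lemma norm_g : ‖phi (-2 / 3)‖ ≤ 2 / 3 := by
  rw [Prod.norm_def]
  refine max_le ?_ ?_
  · simp only [phi]
    push_cast
    rw [Real.norm_eq_abs, abs_le]
    norm_num
  · simp only [phi]
    have h3 : ‖((3 : ℕ) : ℚ_[2])‖ = 1 := by
      rw [Padic.norm_natCast_eq_one_iff]
      norm_num
    push_cast at h3 ⊢
    rw [norm_div, norm_neg, norm_two_padic, h3]
    norm_num

lemma norm_d (d : ℕ) (hd : d ≤ 2) : ‖phi ((d : ℚ) / 2)‖ ≤ 2 := by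
  rw [Prod.norm_def]
  refine max_le ?_ ?_
  · simp only [phi]
    interval_cases d <;> norm_num
  · simp only [phi]
    have h : ‖((d : ℤ) : ℚ_[2])‖ ≤ 1 := Padic.norm_int_le_one _
    push_cast at h ⊢
    rw [norm_div, norm_two_padic]
    linarith

lemma norm_term (d i : ℕ) (hd : d ≤ 2) :
    ‖phi ((1 / 2 : ℚ) * (d : ℚ) * (-3 / 2 : ℚ) ^ (-(i : ℤ) - 1))‖ ≤ 2 * (2 / 3 : ℝ) ^ (i + 1) := by
  rw [term_eq]
  refine (norm_mul_le _ _).trans ?_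
  refine mul_le_mul (norm_d d hd) ?_ (norm_nonneg _) (by norm_num)
  refine (norm_pow_le' _ (Nat.succ_pos _)).trans ?_
  exact pow_le_pow_left₀ (norm_nonneg _) norm_g _

lemma summable_bound : Summable (fun i : ℕ => 2 * (2 / 3 : ℝ) ^ (i + 1)) := by
  refine Summable.mul_left _ ?_
  exact (summable_nat_add_iff 1).2 (summable_geometric_of_lt_one (by norm_num) (by norm_num))

lemma Ftile_compact : IsCompact Ftile := by
  have h : Ftile = Set.range (fun d : ℕ → Fin 3 => ∑' i : ℕ,
      phi ((1 / 2 : ℚ) * ((d i : ℕ) : ℚ) * (-3 / 2 : ℚ) ^ (-(i : ℤ) - 1))) := by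
    ext x
    constructor
    · rintro ⟨d, hd, hs⟩
      refine ⟨fun i => ⟨d i, by have := hd i; omega⟩, ?_⟩
      exact hs.tsum_eq
    · rintro ⟨d, rfl⟩
      refine ⟨fun i => d i, fun i => Nat.le_of_lt_succ (d i).2, ?_⟩
      refine Summable.hasSum ?_
      exact Summable.of_norm_bounded summable_bound
        (fun i => norm_term _ _ (Nat.le_of_lt_succ (d i).2))
  rw [h]
  refine isCompact_range ?_
  refine continuous_tsum (u := fun i : ℕ => 2 * (2 / 3 : ℝ) ^ (i + 1)) ?_ summable_bound ?_
  · intro i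
    have : Continuous (fun k : Fin 3 =>
      phi ((1 / 2 : ℚ) * ((k : ℕ) : ℚ) * (-3 / 2 : ℚ) ^ (-(i : ℤ) - 1))) :=
      continuous_of_discreteTopology
    exact this.comp (continuous_apply i)
  · intro i d
    exact norm_term _ _ (Nat.le_of_lt_succ (d i).2)

lemma Ftile_zero : (0 : ℝ × ℚ_[2]) ∈ Ftile := by
  refine ⟨fun _ => 0, fun _ => by norm_num, ?_⟩
  have : phi 0 = 0 := by ext <;> simp [phi]
  simp [this, hasSum_zero]

lemma Ftile_step {f : ℝ × ℚ_[2]} (hf : f ∈ Ftile) {d : ℕ} (hd : d ≤ 2) :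
    phi (-2 / 3) * (phi ((d : ℚ) / 2) + f) ∈ Ftile := by
  obtain ⟨e, he, hs⟩ := hf
  refine ⟨fun i => Nat.casesOn i d e, ?_, ?_⟩
  · intro i
    cases i
    · exact hd
    · exact he _
  · rw [← hasSum_nat_add_iff' 1]
    simp only [term_eq] at hs ⊢
    have h1 : (fun i : ℕ => phi ((e i : ℚ) / 2) * phi (-2 / 3) ^ (i + 1 + 1))
        = fun i : ℕ => phi (-2 / 3) * (phi ((e i : ℚ) / 2) * phi (-2 / 3) ^ (i + 1)) := by
      funext i
      ring
    have h2 : phi (-2 / 3) * (phi ((d : ℚ) / 2) + f) -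
        phi ((d : ℚ) / 2) * phi (-2 / 3) ^ (0 + 1) = phi (-2 / 3) * f := by
      ring
    rw [Finset.sum_range_one]
    change HasSum (fun i : ℕ => phi ((e i : ℚ) / 2) * phi (-2 / 3) ^ (i + 1 + 1))
      (phi (-2 / 3) * (phi ((d : ℚ) / 2) + f) - phi ((d : ℚ) / 2) * phi (-2 / 3) ^ (0 + 1))
    rw [h1, h2]
    exact hs.mul_left (phi (-2 / 3))

lemma dy_small {z : ℚ} (hz : IsDy z) (h : ‖phi z‖ < 1) : z = 0 := by
  obtain ⟨a, l, rfl⟩ := hz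
  rw [Prod.norm_def, max_lt_iff] at h
  obtain ⟨h1, h2⟩ := h
  simp only [phi] at h1 h2
  push_cast at h1 h2
  have hdvd : ((2 : ℕ) : ℤ) ^ l ∣ a := by
    rw [← Padic.norm_int_le_pow_iff_dvd]
    rw [norm_div, norm_pow, norm_two_padic, div_lt_one (by positivity)] at h2
    refine h2.le.trans (le_of_eq ?_)
    simp [zpow_neg]
  obtain ⟨b, rfl⟩ := hdvd
  push_cast at h1 ⊢
  rw [mul_div_cancel_left₀ _ (by positivity)] at h1 ⊢
  rw [Real.norm_eq_abs] at h1
  have : |b| < 1 := by exact_mod_cast h1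
  rw [Int.abs_lt_one_iff] at this
  simp [this]

lemma dy_closed : IsClosed (phi '' {z | IsDy z}) := by
  refine Metric.isClosed_of_pairwise_le_dist (ε := 1) one_pos ?_
  rintro _ ⟨x, hx, rfl⟩ _ ⟨y, hy, rfl⟩ hne
  by_contra! hlt
  rw [dist_eq_norm, ← phi_sub] at hlt
  have := dy_small (IsDy.sub hx hy) hlt
  exact hne (by rw [sub_eq_zero.1 this])

lemma padic_approx (y : ℚ_[2]) : ∃ z : ℚ, IsDy z ∧ ‖y - (z : ℚ_[2])‖ ≤ 1 := by
  obtain ⟨l, hl⟩ := pow_unbounded_of_one_lt ‖y‖ (one_lt_two)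
  have h1 : ‖y * 2 ^ l‖ ≤ 1 := by
    rw [norm_mul, norm_pow, norm_two_padic]
    rw [div_pow, one_pow, mul_one_div, div_le_one (by positivity)]
    exact hl.le
  obtain ⟨w, hw⟩ : ∃ w : ℤ_[2], (w : ℚ_[2]) = y * 2 ^ l := ⟨⟨y * 2 ^ l, h1⟩, rfl⟩
  obtain ⟨n, hn⟩ := PadicInt.denseRange_natCast.exists_dist_lt w
    (show (0 : ℝ) < (1 / 2) ^ l by positivity)
  rw [dist_eq_norm, PadicInt.norm_def] at hn
  push_cast at hn
  rw [hw] at hn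
  refine ⟨((n : ℤ) : ℚ) / 2 ^ l, ⟨n, l, rfl⟩, ?_⟩
  push_cast
  have e : y - (n : ℚ_[2]) / 2 ^ l = (y * 2 ^ l - n) / 2 ^ l := by
    field_simp
  rw [e, norm_div, norm_pow, norm_two_padic, div_le_one (by positivity)]
  exact hn.le

lemma approx (y : ℝ × ℚ_[2]) : ∃ z : ℚ, IsDy z ∧ ‖y - phi z‖ ≤ 1 := by
  obtain ⟨z, ⟨a, l, rfl⟩, hz⟩ := padic_approx y.2
  refine ⟨(a : ℚ) / 2 ^ l + (⌊y.1 - (a : ℝ) / 2 ^ l⌋ : ℤ),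
    ⟨a + ⌊y.1 - (a : ℝ) / 2 ^ l⌋ * 2 ^ l, l, ?_⟩, ?_⟩
  · push_cast
    field_simp
  · rw [Prod.norm_def]
    refine max_le ?_ ?_
    · simp only [phi, Prod.fst_sub]
      push_cast
      have e1 := Int.floor_le (y.1 - (a : ℝ) / 2 ^ l)
      have e2 := Int.lt_floor_add_one (y.1 - (a : ℝ) / 2 ^ l)
      rw [Real.norm_eq_abs, abs_le]
      constructor <;> linarith
    · simp only [phi, Prod.snd_sub]
      rw [Rat.cast_add, ← sub_sub, sub_eq_add_neg]
      refine (Padic.nonarchimedean _ _).trans (max_le hz ?_)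
      rw [norm_neg, Rat.cast_intCast]
      exact Padic.norm_int_le_one _

lemma dy_digit {z : ℚ} (hz : IsDy z) :
    ∃ (d : ℕ) (z' : ℚ), d ≤ 2 ∧ IsDy z' ∧ z = (-3 / 2) * z' + (d : ℚ) / 2 := by
  obtain ⟨a, l, rfl⟩ := hz
  have key : ∃ d : ℕ, d ≤ 2 ∧ (3 : ℤ) ∣ d * 2 ^ l - 2 * a := by
    have h2 : ((2 : ℤ) ^ l) % 3 = 1 ∨ ((2 : ℤ) ^ l) % 3 = 2 := by
      induction l with
      | zero => left; norm_num
      | succ n ih => rw [pow_succ]; omega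
    have ha : a % 3 = 0 ∨ a % 3 = 1 ∨ a % 3 = 2 := by omega
    generalize (2 : ℤ) ^ l = m at h2
    rcases h2 with h2 | h2 <;> rcases ha with ha | ha | ha
    · exact ⟨0, by norm_num, by push_cast; omega⟩
    · exact ⟨2, by norm_num, by push_cast; omega⟩
    · exact ⟨1, by norm_num, by push_cast; omega⟩
    · exact ⟨0, by norm_num, by push_cast; omega⟩
    · exact ⟨1, by norm_num, by push_cast; omega⟩
    · exact ⟨2, by norm_num, by push_cast; omega⟩
  obtain ⟨d, hd, b, hb⟩ := key
  refine ⟨d, (b : ℚ) / 2 ^ l, hd, ⟨b, l, rfl⟩, ?_⟩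
  have hb' : (d : ℚ) * 2 ^ l - 2 * a = 3 * b := by exact_mod_cast hb
  field_simp
  linarith

lemma approx_cover (N : ℕ) : ∀ x : ℝ × ℚ_[2], ∃ z : ℚ, IsDy z ∧ ∃ f ∈ Ftile,
    ∃ y : ℝ × ℚ_[2], ‖y‖ ≤ 1 ∧ x = f + phi z + phi (-2 / 3) ^ N * y := by
  induction N with
  | zero =>
    intro x
    obtain ⟨z, hz, h⟩ := approx x
    exact ⟨z, hz, 0, Ftile_zero, x - phi z, h, by ring⟩
  | succ N ih =>
    intro x
    obtain ⟨z, hz, f, hf, y, hy, h⟩ := ih (phi (-3 / 2) * x)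
    obtain ⟨d, z', hd, hz', rfl⟩ := dy_digit hz
    refine ⟨z', hz', _, Ftile_step hf hd, y, hy, ?_⟩
    have hg : phi (-2 / 3) * phi (-3 / 2) = 1 := by
      rw [← phi_mul, ← phi_one]; norm_num
    rw [phi_add, phi_mul] at h
    calc x = phi (-2 / 3) * (phi (-3 / 2) * x) := by rw [← mul_assoc, hg, one_mul]
      _ = _ := by
        rw [h]
        linear_combination (phi z') * hg

open scoped Pointwise in
lemma cover_sum (x : ℝ × ℚ_[2]) : x ∈ Ftile + phi '' {z | IsDy z} := by
  have hcl : IsClosed (Ftile + phi '' {z | IsDy z}) :=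
    dy_closed.add_left_of_isCompact Ftile_compact
  rw [← hcl.closure_eq, Metric.mem_closure_iff]
  intro ε hε
  obtain ⟨N, hN⟩ := exists_pow_lt_of_lt_one hε (show (2 / 3 : ℝ) < 1 by norm_num)
  obtain ⟨z, hz, f, hf, y, hy, h⟩ := approx_cover (N + 1) x
  refine ⟨f + phi z, Set.add_mem_add hf ⟨z, hz, rfl⟩, ?_⟩
  rw [dist_eq_norm, h, add_sub_cancel_left]
  refine lt_of_le_of_lt ?_ hN
  calc ‖phi (-2 / 3) ^ (N + 1) * y‖ ≤ ‖phi (-2 / 3) ^ (N + 1)‖ * ‖y‖ := norm_mul_le _ _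
    _ ≤ (2 / 3) ^ (N + 1) * 1 := by
      refine mul_le_mul ?_ hy (norm_nonneg _) (by positivity)
      refine (norm_pow_le' _ (Nat.succ_pos _)).trans ?_
      exact pow_le_pow_left₀ (norm_nonneg _) norm_g _
    _ ≤ (2 / 3) ^ N := by
      rw [mul_one]
      exact pow_le_pow_of_le_one (by norm_num) (by norm_num) (Nat.le_succ N)

/-- The collection `{F + φ(z) : z ∈ ℤ[1/2]}` covers `K = ℝ × ℚ₂`,
i.e. `F + φ(ℤ[1/2]) = K`. -/
theorem Ftile_translates_cover :
    {x : ℝ × ℚ_[2] | ∃ f ∈ Ftile, ∃ z : ℚ,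
        (∃ (a : ℤ) (ℓ : ℕ), z = (a : ℚ) / 2 ^ ℓ) ∧ x = f + phi z} =
      Set.univ := by
  rw [Set.eq_univ_iff_forall]
  intro x
  obtain ⟨f, hf, _, ⟨z, hz, rfl⟩, rfl⟩ := cover_sum x
  exact ⟨f, hf, z, hz, rfl⟩
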